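/- Let S = S(t,z) be the unique formal power series in t with coefficients in ℚ[z], constant term 0, satisfying 1 − tz/(1−S) − t/S = 0, equivalently S = (1+t−tz − √(1−2t(1+z)+t²(1−z)²))/2. Then for all integers n ≥ 1 and k ∈ ℤ, the coefficient of tⁿ in Sᵏ(S−1) equals: 0 if n < k; −1 if n = k; 1−kz if n = k+1; and (1/n)·Σ_{p=1}^{n−k} zᵖ·C(n,p)·C(n−k−1,p−1)·(n−p−kp)/(n−k−1) otherwise. -/

import Mathlib

open scoped LaurentSeries

/-- Binomial coefficient with arbitrary rational upper argument. -/
noncomputable def ratChoose (x : ℚ) (b : ℕ) : ℚ :=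
  (∏ i ∈ Finset.range b, (x - i)) / (Nat.factorial b)

noncomputable section

/-- The coefficient field ℚ(z): rational functions in z. -/
abbrev K := RatFunc ℚ

/-- z, as an element of the coefficient field. -/
def z : K := RatFunc.X

/-- t, as a Laurent series. -/
def t : LaurentSeries K := HahnSeries.single 1 1

/-!
Over any field of characteristic zero, the quadratic equation says `S = t φ(S)` with
`φ(s) = 1 + z s / (1 - s)`, so Lagrange inversion applies. Its proof is a residue computation:
`n [tⁿ] Sᵏ` is the residue of `t⁻ⁿ d(Sᵏ) = k S ^ (k - 1 - n) φ(S)ⁿ dS`, and since `Sʲ dS` is exact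
unless `j = -1`, while `dS / S` has residue the order of `S`, this residue is `k [sⁿ⁻ᵏ] φ(s)ⁿ`. It
remains to subtract the results for `k + 1` and `k` and to expand `φ(s)ⁿ` by the binomial theorem.
-/

open scoped PowerSeries
open PowerSeries (constantCoeff heval)

/-- The Euler operator `X d/dX` on Laurent series. Since it preserves degrees, the residue of the
differential `f dg` is the coefficient of `f * eulerDerivation g` at `0`. -/
def eulerDerivation (R : Type*) [CommRing R] : Derivation R R⸨X⸩ R⸨X⸩ where
  toFun f := ⟨fun n ↦ n * f.coeff n, f.isPWO_support.mono fun n hn h ↦ hn (by simp [h])⟩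
  map_add' f g := by ext n; simp [mul_add]
  map_smul' r f := by ext n; simp [Algebra.smul_def, HahnSeries.algebraMap_apply', mul_left_comm]
  map_one_eq_zero' := by ext n; by_cases hn : n = 0 <;> simp [HahnSeries.coeff_one, hn]
  leibniz' f g := by
    ext n
    simp only [LinearMap.coe_mk, AddHom.coe_mk, smul_eq_mul, HahnSeries.coeff_add]
    rw [HahnSeries.coeff_mul, mul_comm g,
      HahnSeries.coeff_mul_right' (y := ⟨_, _⟩) g.isPWO_support fun m hm h ↦ hm (by simp [h]),
      HahnSeries.coeff_mul_left' (x := ⟨_, _⟩) f.isPWO_support fun m hm h ↦ hm (by simp [h]),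
      ← Finset.sum_add_distrib, Finset.mul_sum]
    refine Finset.sum_congr rfl fun ij hij ↦ ?_
    rw [← (Finset.mem_antidiagonal.mp hij).2.2]
    push_cast
    ring

theorem coeff_eulerDerivation {R : Type*} [CommRing R] (f : R⸨X⸩) (n : ℤ) :
    (eulerDerivation R f).coeff n = n * f.coeff n := rfl

theorem orderTop_le_orderTop_eulerDerivation {R : Type*} [CommRing R] (f : R⸨X⸩) :
    f.orderTop ≤ (eulerDerivation R f).orderTop := by
  refine HahnSeries.le_orderTop_iff_forall.mpr fun i hi ↦ ?_
  rw [coeff_eulerDerivation, HahnSeries.coeff_eq_zero_of_lt_orderTop hi, mul_zero]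

theorem zero_le_orderTop_heval {Γ R : Type*} [AddCommMonoid Γ] [LinearOrder Γ]
    [IsOrderedCancelAddMonoid Γ] [CommRing R] (x : HahnSeries Γ R) (f : R⟦X⟧) :
    0 ≤ (heval x f).orderTop := by
  refine HahnSeries.le_orderTop_iff_forall.mpr fun i hi ↦ ?_
  have hpow (n : ℕ) : (HahnSeries.SummableFamily.powers x n).coeff i = 0 := by
    by_cases hx : 0 < x.orderTop
    · rw [HahnSeries.SummableFamily.powers_of_orderTop_pos hx]
      exact HahnSeries.coeff_eq_zero_of_lt_orderTop <| hi.trans_le <|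
        (nsmul_nonneg hx.le n).trans HahnSeries.orderTop_nsmul_le_orderTop_pow
    -- `powers x` consists of the powers of `0` when `x` has nonpositive order
    · have hi0 : i ≠ 0 := (WithTop.coe_lt_coe.mp hi).ne
      cases n <;> simp [hx, HahnSeries.coeff_one, hi0]
  rw [PowerSeries.coeff_heval]
  exact finsum_eq_zero_of_forall_eq_zero fun n ↦ (mul_eq_zero_of_right (f.coeff n) (hpow n) :)

theorem coeff_zero_pow_mul_heval_mul_eulerDerivation {R : Type*} [CommRing R] {S : R⸨X⸩}
    (hS : 0 < S.orderTop) (i : ℕ) (f : R⟦X⟧) :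
    (S ^ i * heval S f * eulerDerivation R S).coeff 0 = 0 := by
  apply HahnSeries.coeff_eq_zero_of_lt_orderTop
  have hpow : 0 ≤ (S ^ i).orderTop :=
    (nsmul_nonneg hS.le i).trans HahnSeries.orderTop_nsmul_le_orderTop_pow
  have hprod : 0 ≤ (S ^ i * heval S f).orderTop :=
    (add_nonneg hpow (zero_le_orderTop_heval S f)).trans HahnSeries.orderTop_add_le_mul
  calc 0 < (eulerDerivation R S).orderTop :=
        hS.trans_le (orderTop_le_orderTop_eulerDerivation S)
    _ ≤ (S ^ i * heval S f).orderTop + (eulerDerivation R S).orderTop :=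
        le_add_of_nonneg_left hprod
    _ ≤ (S ^ i * heval S f * eulerDerivation R S).orderTop := HahnSeries.orderTop_add_le_mul

theorem order_eq_one_of_eq_X_mul_heval {R : Type*} [CommRing R] [IsDomain R] {S : R⸨X⸩}
    {φ : R⟦X⟧} (hφ : constantCoeff φ ≠ 0) (hSφ : S = HahnSeries.single 1 1 * heval S φ) :
    S.order = 1 := by
  have hcoeff : (heval S φ).coeff 0 ≠ 0 := by rwa [PowerSeries.coeff_heval_zero]
  have hle : (heval S φ).order ≤ 0 := HahnSeries.order_le_of_coeff_ne_zero hcoeff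
  have hge : 0 ≤ (heval S φ).order :=
    HahnSeries.zero_le_orderTop_iff.mp (zero_le_orderTop_heval S φ)
  rw [hSφ, HahnSeries.order_mul (by simp) (HahnSeries.ne_zero_of_coeff_ne_zero hcoeff),
    HahnSeries.order_single one_ne_zero, hle.antisymm hge, add_zero]

section Lagrange

variable {F : Type*} [Field F] {S : F⸨X⸩} {φ : F⟦X⟧}

theorem coeff_zero_inv_mul_eulerDerivation (hS : S ≠ 0) :
    (S⁻¹ * eulerDerivation F S).coeff 0 = S.order := by
  have hlt : S.orderTop < (eulerDerivation F S - HahnSeries.C (S.order : F) * S).orderTop := by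
    rw [← HahnSeries.order_eq_orderTop_of_ne_zero hS]
    refine (WithTop.coe_lt_coe.mpr (lt_add_one S.order)).trans_le
      (HahnSeries.le_orderTop_iff_forall.mpr fun i hi ↦ ?_)
    rcases (Int.lt_add_one_iff.mp (WithTop.coe_lt_coe.mp hi)).lt_or_eq with h | rfl
    · simp [coeff_eulerDerivation, HahnSeries.coeff_eq_zero_of_lt_order h, -map_intCast]
    · simp [coeff_eulerDerivation, -map_intCast]
  have hinv : S⁻¹.orderTop + S.orderTop = 0 := by
    rw [← HahnSeries.orderTop_mul, inv_mul_cancel₀ hS, HahnSeries.orderTop_one]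
  have hzero : (S⁻¹ * (eulerDerivation F S - HahnSeries.C (S.order : F) * S)).coeff 0 = 0 := by
    apply HahnSeries.coeff_eq_zero_of_lt_orderTop
    rw [HahnSeries.orderTop_mul, WithTop.coe_zero, ← hinv]
    exact WithTop.add_lt_add_left (by intro h; simp [h] at hinv) hlt
  rw [mul_sub, mul_left_comm, inv_mul_cancel₀ hS, mul_one, HahnSeries.coeff_sub, sub_eq_zero,
    HahnSeries.C_apply, HahnSeries.coeff_single_same] at hzero
  exact hzero

theorem coeff_zero_zpow_mul_eulerDerivation [CharZero F] (S : F⸨X⸩) {j : ℤ} (hj : j ≠ -1) :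
    (S ^ j * eulerDerivation F S).coeff 0 = 0 := by
  have hexact : eulerDerivation F (S ^ (j + 1)) = (j + 1) • (S ^ j * eulerDerivation F S) := by
    rw [Derivation.leibniz_zpow, add_sub_cancel_right, smul_eq_mul]
  have hcoeff := congrArg (HahnSeries.coeff · 0) hexact
  simp only [coeff_eulerDerivation, Int.cast_zero, zero_mul, HahnSeries.coeff_smul] at hcoeff
  exact (smul_eq_zero.mp hcoeff.symm).resolve_left (by omega)

theorem coeff_zero_zpow_mul_heval_mul_eulerDerivation [CharZero F] (hS : 0 < S.order) (j : ℤ)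
    (f : F⟦X⟧) :
    (S ^ j * heval S f * eulerDerivation F S).coeff 0 = S.order * (f : F⸨X⸩).coeff (-1 - j) := by
  have hS0 : S ≠ 0 := by rintro rfl; simp at hS
  have hpos : 0 < S.orderTop := HahnSeries.zero_lt_orderTop_of_order hS
  obtain ⟨i, rfl⟩ | ⟨i, rfl⟩ : (∃ i : ℕ, j = i) ∨ ∃ i : ℕ, j = -1 - i := by
    rcases le_or_gt 0 j with h | h
    · exact .inl ⟨j.toNat, by omega⟩
    · exact .inr ⟨(-1 - j).toNat, by omega⟩
  · rw [zpow_natCast, coeff_zero_pow_mul_heval_mul_eulerDerivation hpos, PowerSeries.coeff_coe,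
      if_pos (by omega), mul_zero]
  rw [sub_sub_cancel, LaurentSeries.coeff_coe_powerSeries]
  have hsplit (f : F⟦X⟧) (j : ℤ) : S ^ j * heval S f * eulerDerivation F S =
      S ^ (j + 1) * heval S (.mk fun p ↦ f.coeff (p + 1)) * eulerDerivation F S +
        constantCoeff f • (S ^ j * eulerDerivation F S) := by
    conv_lhs => rw [f.eq_X_mul_shift_add_const]
    rw [map_add, map_mul, PowerSeries.heval_X _ hpos, PowerSeries.heval_C, zpow_add_one₀ hS0,
      ← HahnSeries.C_mul_eq_smul, ← HahnSeries.C_mul_eq_smul]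
    ring
  induction i generalizing f with
  | zero =>
    rw [hsplit, show (-1 - (0 : ℕ) + 1 : ℤ) = (0 : ℕ) by simp, zpow_natCast, HahnSeries.coeff_add,
      coeff_zero_pow_mul_heval_mul_eulerDerivation hpos, HahnSeries.coeff_smul, Nat.cast_zero,
      sub_zero, zpow_neg_one, coeff_zero_inv_mul_eulerDerivation hS0, zero_add, smul_eq_mul,
      mul_comm, PowerSeries.coeff_zero_eq_constantCoeff_apply]
  | succ i ih =>
    rw [hsplit, show (-1 - (i + 1 : ℕ) + 1 : ℤ) = -1 - i by push_cast; ring, HahnSeries.coeff_add,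
      ih, HahnSeries.coeff_smul, coeff_zero_zpow_mul_eulerDerivation S (by omega), smul_zero,
      add_zero, PowerSeries.coeff_mk]

theorem natCast_mul_coeff_zpow_of_eq_X_mul_heval [CharZero F] (hφ : constantCoeff φ ≠ 0)
    (hSφ : S = HahnSeries.single 1 1 * heval S φ) (n : ℕ) (k : ℤ) :
    n * (S ^ k).coeff n = k * ((φ ^ n : F⟦X⟧) : F⸨X⸩).coeff (n - k) := by
  have horder : S.order = 1 := order_eq_one_of_eq_X_mul_heval hφ hSφ
  have hS0 : S ≠ 0 := by rintro rfl; simp at horder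
  have hpow : S ^ n = HahnSeries.single (n : ℤ) 1 * heval S (φ ^ n) := by
    conv_lhs => rw [hSφ, mul_pow, HahnSeries.single_pow, one_pow, ← map_pow, nsmul_one]
  have hexpand : eulerDerivation F (S ^ k) = HahnSeries.single (n : ℤ) 1 *
      k • (S ^ (k - 1 - n) * heval S (φ ^ n) * eulerDerivation F S) := by
    rw [Derivation.leibniz_zpow, smul_eq_mul, ← sub_add_cancel (k - 1) (n : ℤ), zpow_add₀ hS0,
      zpow_natCast, hpow, sub_add_cancel]
    simp only [zsmul_eq_mul]
    ring
  calc n * (S ^ k).coeff n = (eulerDerivation F (S ^ k)).coeff n := by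
        rw [coeff_eulerDerivation, Int.cast_natCast]
    _ = k * (S ^ (k - 1 - n) * heval S (φ ^ n) * eulerDerivation F S).coeff 0 := by
        rw [hexpand, HahnSeries.coeff_single_mul, sub_self, one_mul, HahnSeries.coeff_smul,
          zsmul_eq_mul]
    _ = k * ((φ ^ n : F⟦X⟧) : F⸨X⸩).coeff (n - k) := by
        rw [coeff_zero_zpow_mul_heval_mul_eulerDerivation (by omega), horder, Int.cast_one, one_mul,
          show -1 - (k - 1 - n) = n - k by ring]

theorem natCast_mul_coeff_zpow_mul_sub_one_of_eq_X_mul_heval [CharZero F]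
    (hφ : constantCoeff φ ≠ 0) (hSφ : S = HahnSeries.single 1 1 * heval S φ) (n : ℕ) (k : ℤ) :
    n * (S ^ k * (S - 1)).coeff n =
      (k + 1) * ((φ ^ n : F⟦X⟧) : F⸨X⸩).coeff (n - k - 1) -
        k * ((φ ^ n : F⟦X⟧) : F⸨X⸩).coeff (n - k) := by
  have hS0 : S ≠ 0 := by
    rintro rfl
    simpa using order_eq_one_of_eq_X_mul_heval hφ hSφ
  rw [mul_sub, mul_one, ← zpow_add_one₀ hS0, HahnSeries.coeff_sub, mul_sub,
    natCast_mul_coeff_zpow_of_eq_X_mul_heval hφ hSφ,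
    natCast_mul_coeff_zpow_of_eq_X_mul_heval hφ hSφ,
    sub_add_eq_sub_sub, Int.cast_add, Int.cast_one]

end Lagrange

section Kernel

open PowerSeries (C X coeff mk)

/-- The power series `1 + c X / (1 - X)`. It is the series `φ` for which the quadratic equation
defining `S` takes the form `S = t φ(S)` of Lagrange inversion. -/
def lagrangeKernel {R : Type*} [CommRing R] (c : R) : R⟦X⟧ :=
  1 + C c * (X * mk 1)

variable {R : Type*} [CommRing R]

theorem constantCoeff_lagrangeKernel (c : R) : constantCoeff (lagrangeKernel c) = 1 := by
  simp [lagrangeKernel]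

theorem one_sub_X_mul_lagrangeKernel (c : R) :
    (1 - X) * lagrangeKernel c = 1 - X + C c * X := by
  have hgeom : (mk 1 : R⟦X⟧) * (1 - X) = 1 := PowerSeries.mk_one_mul_one_sub_eq_one R
  rw [lagrangeKernel]
  linear_combination C c * X * hgeom

theorem coeff_succ_X_mul_mk_one_pow_succ (m q : ℕ) :
    coeff (m + 1) ((X * mk 1 : R⟦X⟧) ^ (q + 1)) = m.choose q := by
  rw [mul_pow, PowerSeries.mk_one_pow_eq_mk_choose_add, PowerSeries.coeff_X_pow_mul']
  split_ifs with hq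
  · rw [PowerSeries.coeff_mk, show q + (m + 1 - (q + 1)) = m by omega]
  · rw [Nat.choose_eq_zero_of_lt (by omega), Nat.cast_zero]

theorem coeff_succ_lagrangeKernel_pow (c : R) (m n : ℕ) :
    coeff (m + 1) (lagrangeKernel c ^ n) =
      ∑ q ∈ Finset.range n, c ^ (q + 1) * (n.choose (q + 1) * m.choose q) := by
  have hexpand : lagrangeKernel c ^ n =
      ∑ p ∈ Finset.range (n + 1), C (c ^ p * n.choose p) * (X * mk 1) ^ p := by
    rw [lagrangeKernel, add_comm, add_pow]
    refine Finset.sum_congr rfl fun p _ ↦ ?_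
    rw [map_mul, map_pow, map_natCast]
    ring
  rw [hexpand, map_sum, Finset.sum_range_succ']
  simp only [PowerSeries.coeff_C_mul, coeff_succ_X_mul_mk_one_pow_succ, mul_assoc, pow_zero,
    PowerSeries.coeff_one, m.succ_ne_zero, if_false, mul_zero, add_zero]

theorem coeff_one_lagrangeKernel_pow (c : R) (n : ℕ) :
    coeff 1 (lagrangeKernel c ^ n) = n * c := by
  rw [PowerSeries.coeff_one_pow, constantCoeff_lagrangeKernel]
  simp [lagrangeKernel]

theorem sum_range_mul_choose_succ_eq_sum_Icc (f : ℕ → R) (m n : ℕ) :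
    ∑ q ∈ Finset.range n, f (q + 1) * (n.choose (q + 1) * m.choose q) =
      ∑ p ∈ Finset.Icc 1 (m + 1), f p * (n.choose p * m.choose (p - 1)) := by
  let summand (p : ℕ) : R := f p * (n.choose p * m.choose (p - 1))
  calc ∑ q ∈ Finset.range n, summand (q + 1)
      = ∑ q ∈ Finset.range (n + (m + 1)), summand (q + 1) := by
        refine Finset.sum_subset (Finset.range_subset_range.mpr (by omega)) fun q _ hq ↦ ?_
        rw [Finset.mem_range, not_lt] at hq
        simp [summand, Nat.choose_eq_zero_of_lt (Nat.lt_succ_of_le hq)]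
    _ = ∑ q ∈ Finset.range (m + 1), summand (q + 1) := by
        refine (Finset.sum_subset (Finset.range_subset_range.mpr (by omega)) fun q _ hq ↦ ?_).symm
        rw [Finset.mem_range, not_lt] at hq
        simp [summand, Nat.choose_eq_zero_of_lt hq]
    _ = ∑ p ∈ Finset.Icc 1 (m + 1), summand p := by
        rw [Finset.range_eq_Ico, Finset.sum_Ico_add']
        rfl

variable {F : Type*} [Field F] [CharZero F]

theorem add_one_mul_choose_sub_mul_succ_choose (k : F) (m q : ℕ) :
    (k + 1) * m.choose q - k * (m + 1).choose q =
      (m + 1).choose q * ((m + 1 - q - k * q) / (m + 1)) := by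
  have hchoose : (m.choose q * (m + 1) : F) = (m + 1).choose q * (m + 1 - q) := by
    rcases le_or_gt q (m + 1) with hq | hq
    · have hnat := congrArg (Nat.cast : ℕ → F) (Nat.choose_mul_succ_eq m q)
      push_cast [hq] at hnat
      exact hnat
    · simp [Nat.choose_eq_zero_of_lt hq, Nat.choose_eq_zero_of_lt (Nat.lt_of_succ_lt hq)]
  have hm : (m + 1 : F) ≠ 0 := m.cast_add_one_ne_zero
  field_simp
  linear_combination (k + 1) * hchoose

theorem add_one_mul_coeff_sub_mul_coeff_lagrangeKernel_pow (c k : F) (m n : ℕ) :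
    (k + 1) * coeff (m + 1) (lagrangeKernel c ^ n) - k * coeff (m + 2) (lagrangeKernel c ^ n) =
      ∑ p ∈ Finset.Icc 1 (m + 2), c ^ p *
        (n.choose p * (m + 1).choose (p - 1) * ((k + m + 2 - p - k * p) / (m + 1))) := by
  calc (k + 1) * coeff (m + 1) (lagrangeKernel c ^ n) - k * coeff (m + 2) (lagrangeKernel c ^ n)
      = ∑ q ∈ Finset.range n,
          c ^ (q + 1) * ((k + m + 2 - (q + 1 : ℕ) - k * (q + 1 : ℕ)) / (m + 1)) *
            (n.choose (q + 1) * (m + 1).choose q) := by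
        rw [coeff_succ_lagrangeKernel_pow, coeff_succ_lagrangeKernel_pow, Finset.mul_sum,
          Finset.mul_sum, ← Finset.sum_sub_distrib]
        refine Finset.sum_congr rfl fun q _ ↦ ?_
        push_cast
        linear_combination
          c ^ (q + 1) * n.choose (q + 1) * add_one_mul_choose_sub_mul_succ_choose k m q
    _ = ∑ p ∈ Finset.Icc 1 (m + 2), c ^ p * ((k + m + 2 - p - k * p) / (m + 1)) *
          (n.choose p * (m + 1).choose (p - 1)) :=
        sum_range_mul_choose_succ_eq_sum_Icc
          (fun p ↦ c ^ p * ((k + m + 2 - p - k * p) / (m + 1))) (m + 1) n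
    _ = _ := Finset.sum_congr rfl fun p _ ↦ by ring

end Kernel

theorem zero_lt_orderTop_of_coeff_eq_zero {R : Type*} [Zero R] {S : R⸨X⸩}
    (hneg : ∀ i : ℤ, i < 0 → S.coeff i = 0) (h0 : S.coeff 0 = 0) : 0 < S.orderTop := by
  have hle : ((0 + 1 : ℤ) : WithTop ℤ) ≤ S.orderTop := by
    refine HahnSeries.le_orderTop_iff_forall.mpr fun i hi ↦ ?_
    rcases (Int.lt_add_one_iff.mp (WithTop.coe_lt_coe.mp hi)).lt_or_eq with h | rfl
    exacts [hneg i h, h0]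
  exact (WithTop.coe_lt_coe.mpr zero_lt_one).trans_le hle

theorem ratChoose_natCast (a b : ℕ) : ratChoose a b = a.choose b := by
  rw [ratChoose, Nat.cast_choose_eq_descPochhammer_div, descPochhammer_eval_eq_prod_range]

theorem eq_X_mul_heval_lagrangeKernel {R : Type*} [CommRing R] [IsDomain R] {S : R⸨X⸩} {c : R}
    (hS : 0 < S.orderTop)
    (heq : S ^ 2 - (1 + HahnSeries.single 1 1 - HahnSeries.single 1 1 * HahnSeries.C c) * S +
      HahnSeries.single 1 1 = 0) :
    S = HahnSeries.single 1 1 * heval S (lagrangeKernel c) := by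
  have hS1 : 1 - S ≠ 0 := by
    intro h
    simp [← sub_eq_zero.mp h] at hS
  have hkernel : (1 - S) * heval S (lagrangeKernel c) = 1 - S + HahnSeries.C c * S := by
    have h := congrArg (heval S) (one_sub_X_mul_lagrangeKernel c)
    simpa only [map_mul, map_sub, map_add, map_one, PowerSeries.heval_X S hS, PowerSeries.heval_C,
      smul_mul_assoc, one_mul, mul_one, ← HahnSeries.C_mul_eq_smul] using h
  refine mul_left_cancel₀ hS1 ?_
  linear_combination -heq - HahnSeries.single 1 1 * hkernel

theorem add_one_mul_coeff_sub_mul_coeff_lagrangeKernel_pow_eq_sum_ratChoose {F : Type*} [Field F]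
    [Algebra ℚ F] (c : F) {n : ℕ} {k : ℤ} (hk : k + 1 < n) :
    (k + 1) * ((lagrangeKernel c ^ n : F⟦X⟧) : F⸨X⸩).coeff (n - k - 1) -
        k * ((lagrangeKernel c ^ n : F⟦X⟧) : F⸨X⸩).coeff (n - k) =
      ∑ p ∈ Finset.Icc 1 ((n : ℤ) - k).toNat,
        c ^ p * algebraMap ℚ F
          (ratChoose (n : ℚ) p * ratChoose ((n : ℚ) - (k : ℚ) - 1) (p - 1) *
            (((n : ℚ) - (p : ℚ) - (k : ℚ) * (p : ℚ)) / ((n : ℚ) - (k : ℚ) - 1))) := by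
  have : CharZero F := algebraRat.charZero F
  obtain ⟨m, rfl⟩ : ∃ m : ℕ, k = n - (m + 2) := ⟨(n - k - 2).toNat, by omega⟩
  have hm_two : (n : ℤ) - (n - (m + 2)) = (m + 2 : ℕ) := by push_cast; ring
  have hm_one : ((m + 2 : ℕ) : ℤ) - 1 = (m + 1 : ℕ) := by push_cast; ring
  have hm_rat : (n : ℚ) - ((n - (m + 2) : ℤ) : ℚ) - 1 = (m + 1 : ℕ) := by push_cast; ring
  rw [hm_two, hm_one, hm_rat, LaurentSeries.coeff_coe_powerSeries,
    LaurentSeries.coeff_coe_powerSeries, Int.toNat_natCast,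
    add_one_mul_coeff_sub_mul_coeff_lagrangeKernel_pow]
  refine Finset.sum_congr rfl fun p _ ↦ ?_
  simp only [ratChoose_natCast, map_mul, map_div₀, map_sub, map_natCast, map_intCast]
  push_cast
  ring

theorem coeff_S_pow_general {F : Type*} [Field F] [Algebra ℚ F] {S : F⸨X⸩} {c : F}
    (hS : 0 < S.orderTop)
    (heq : S ^ 2 - (1 + HahnSeries.single 1 1 - HahnSeries.single 1 1 * HahnSeries.C c) * S +
      HahnSeries.single 1 1 = 0)
    (n : ℕ) (hn : 1 ≤ n) (k : ℤ) :
    (S ^ k * (S - 1)).coeff (n : ℤ)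
      = if (n : ℤ) < k then 0
        else if (n : ℤ) = k then -1
        else if (n : ℤ) = k + 1 then 1 - (k : F) * c
        else algebraMap ℚ F (1 / (n : ℚ)) *
          ∑ p ∈ Finset.Icc 1 ((n : ℤ) - k).toNat,
            c ^ p * algebraMap ℚ F
              (ratChoose (n : ℚ) p * ratChoose ((n : ℚ) - (k : ℚ) - 1) (p - 1) *
                (((n : ℚ) - (p : ℚ) - (k : ℚ) * (p : ℚ)) / ((n : ℚ) - (k : ℚ) - 1))) := by
  have : CharZero F := algebraRat.charZero F
  have hn0 : (n : F) ≠ 0 := Nat.cast_ne_zero.mpr (by omega)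
  have hlagrange := natCast_mul_coeff_zpow_mul_sub_one_of_eq_X_mul_heval
    (φ := lagrangeKernel c) (by simp [constantCoeff_lagrangeKernel])
    (eq_X_mul_heval_lagrangeKernel hS heq) n k
  refine mul_left_cancel₀ hn0 (hlagrange.trans ?_)
  split_ifs with hlt hk hk_add_one
  · simp only [PowerSeries.coeff_coe, if_pos (show (n : ℤ) - k < 0 by omega),
      if_pos (show (n : ℤ) - k - 1 < 0 by omega), mul_zero, sub_zero]
  · subst hk
    rw [sub_self, PowerSeries.coeff_coe, PowerSeries.coeff_coe, if_pos (by omega),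
      if_neg (lt_irrefl 0), Int.natAbs_zero, PowerSeries.coeff_zero_eq_constantCoeff_apply,
      map_pow, constantCoeff_lagrangeKernel]
    simp
  · obtain rfl : k = n - 1 := by omega
    rw [sub_sub_cancel, sub_self, ← Nat.cast_zero, ← Nat.cast_one,
      LaurentSeries.coeff_coe_powerSeries, LaurentSeries.coeff_coe_powerSeries,
      coeff_one_lagrangeKernel_pow]
    simp only [PowerSeries.coeff_zero_eq_constantCoeff_apply, map_pow,
      constantCoeff_lagrangeKernel, one_pow]
    push_cast
    ring
  · rw [add_one_mul_coeff_sub_mul_coeff_lagrangeKernel_pow_eq_sum_ratChoose c (by omega),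
      ← mul_assoc, one_div, map_inv₀, map_natCast, mul_inv_cancel₀ hn0, one_mul]

/-- Let S be the formal power series in t over ℚ[z] (viewed inside the field of Laurent
series over ℚ(z)) with S(0)=0 satisfying S² − (1+t−tz)S + t = 0, i.e. 1 − tz/(1−S) − t/S = 0.
Then for n ≥ 1 and k ∈ ℤ, the coefficient of tⁿ in Sᵏ(S−1) equals: 0 if n < k; −1 if n = k;
1−kz if n = k+1; and (1/n)·Σ_{p=1}^{n−k} zᵖ·C(n,p)·C(n−k−1,p−1)·(n−p−kp)/(n−k−1) otherwise. -/
theorem coeff_S_pow (S : LaurentSeries K)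
    (hneg : ∀ i : ℤ, i < 0 → S.coeff i = 0)
    (h0 : S.coeff 0 = 0)
    (heq : S^2 - (1 + t - t * HahnSeries.C z) * S + t = 0)
    (n : ℕ) (hn : 1 ≤ n) (k : ℤ) :
    (S^k * (S - 1)).coeff (n : ℤ)
      = if (n : ℤ) < k then 0
        else if (n : ℤ) = k then -1
        else if (n : ℤ) = k + 1 then 1 - (k : K) * z
        else algebraMap ℚ K (1/(n : ℚ)) *
          ∑ p ∈ Finset.Icc 1 ((n : ℤ) - k).toNat,
            z^p * algebraMap ℚ K
              (ratChoose (n : ℚ) p * ratChoose ((n : ℚ) - (k : ℚ) - 1) (p-1) *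
                (((n : ℚ) - (p : ℚ) - (k : ℚ)*(p : ℚ)) / ((n : ℚ) - (k : ℚ) - 1))) :=
  coeff_S_pow_general (zero_lt_orderTop_of_coeff_eq_zero hneg h0) heq n hn k

end
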